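/- arXiv:1206.3539 — 2 statements merged into one kernel-verified Lean document; each statement's English description precedes it below -/
import Mathlib

section
/- Let Y be an infinite-dimensional Banach space. If every infinite-dimensional separable closed subspace X of Y that is an ideal in Y has the strong diameter 2 property, then Y has the strong diameter 2 property. -/
universe u v

open Metric Set

section Defs

variable {Y : Type*} [NormedAddCommGroup Y] [NormedSpace ℝ Y]

/-- `X` is an ideal in `Y`. -/
def IsIdeal (X : Subspace ℝ Y) : Prop :=
  ∀ ε : ℝ, 0 < ε → ∀ E : Subspace ℝ Y, FiniteDimensional ℝ E →
    ∃ T : E →ₗ[ℝ] X,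
      (∀ e : E, (e : Y) ∈ X → ((T e : X) : Y) = (e : Y)) ∧
      (∀ e : E, ‖T e‖ ≤ (1 + ε) * ‖e‖)

/-- `X` is a super-ideal in `Y`. -/
def IsSuperIdeal (X : Subspace ℝ Y) : Prop :=
  ∀ ε : ℝ, 0 < ε → ∀ E : Subspace ℝ Y, FiniteDimensional ℝ E →
    ∃ T : E →ₗ[ℝ] X,
      (∀ e : E, (e : Y) ∈ X → ((T e : X) : Y) = (e : Y)) ∧
      (∀ e : E, (1 + ε)⁻¹ * ‖e‖ ≤ ‖T e‖ ∧ ‖T e‖ ≤ (1 + ε) * ‖e‖)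

/-- `X` is a super u-ideal in `Y`. -/
def IsSuperUIdeal (X : Subspace ℝ Y) : Prop :=
  ∀ ε : ℝ, 0 < ε → ∀ E : Subspace ℝ Y, FiniteDimensional ℝ E →
    ∃ T : E →ₗ[ℝ] X,
      (∀ e : E, (e : Y) ∈ X → ((T e : X) : Y) = (e : Y)) ∧
      (∀ e : E, (1 + ε)⁻¹ * ‖e‖ ≤ ‖T e‖ ∧ ‖T e‖ ≤ (1 + ε) * ‖e‖) ∧
      (∀ e : E, ‖(e : Y) - (2 : ℝ) • ((T e : X) : Y)‖ ≤ (1 + ε) * ‖e‖)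

/-- `φ : X* → Y*` is a Hahn-Banach extension operator. -/
def IsHahnBanachExtensionOperator (X : Subspace ℝ Y)
    (φ : (X →L[ℝ] ℝ) →L[ℝ] (Y →L[ℝ] ℝ)) : Prop :=
  ∀ f : X →L[ℝ] ℝ, (∀ x : X, φ f (x : Y) = f x) ∧ ‖φ f‖ = ‖f‖

/-- A set of functionals `V ⊆ Y*` is 1-norming for `Y`. -/
def IsOneNorming (V : Set (Y →L[ℝ] ℝ)) : Prop :=
  ∀ y : Y, ‖y‖ = sSup {r : ℝ | ∃ v ∈ V, ‖v‖ ≤ 1 ∧ r = |v y|}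

end Defs

section Props

variable (Z : Type*) [NormedAddCommGroup Z] [NormedSpace ℝ Z]

/-- A slice of the closed unit ball of `Z`. -/
def IsSlice (S : Set Z) : Prop :=
  ∃ (f : Z →L[ℝ] ℝ) (ε : ℝ), ‖f‖ = 1 ∧ 0 < ε ∧
    S = {z | z ∈ closedBall (0 : Z) 1 ∧ 1 - ε < f z}

/-- The local diameter 2 property. -/
def HasLocalDiameterTwoProperty : Prop :=
  ∀ S : Set Z, IsSlice Z S → Metric.diam S = 2

/-- The diameter 2 property. -/
def HasDiameterTwoProperty : Prop :=
  ∀ U : Set Z, U.Nonempty →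
    (∃ V : Set Z, @IsOpen (WeakSpace ℝ Z) _ V ∧ U = V ∩ closedBall (0 : Z) 1) →
    Metric.diam U = 2

/-- The strong diameter 2 property. -/
def HasStrongDiameterTwoProperty : Prop :=
  ∀ (n : ℕ), 0 < n → ∀ (S : Fin n → Set Z) (lam : Fin n → ℝ),
    (∀ i, IsSlice Z (S i)) → (∀ i, 0 ≤ lam i) → (∑ i, lam i) = 1 →
    Metric.diam {z : Z | ∃ x : Fin n → Z, (∀ i, x i ∈ S i) ∧ z = ∑ i, lam i • x i} = 2

/-- The Daugavet property. -/
def HasDaugavetProperty : Prop :=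
  ∀ T : Z →L[ℝ] Z, Module.finrank ℝ (LinearMap.range (T : Z →ₗ[ℝ] Z)) = 1 →
    ‖ContinuousLinearMap.id ℝ Z + T‖ = 1 + ‖T‖

end Props

/-- `X` is a Gurariĭ space. -/
def IsGurarii (X : Type*) [NormedAddCommGroup X] [NormedSpace ℝ X] : Prop :=
  ∀ ε : ℝ, 0 < ε →
    ∀ (F : Type) [NormedAddCommGroup F] [NormedSpace ℝ F] [FiniteDimensional ℝ F],
      ∀ (E : Subspace ℝ F) (TE : E →ₗᵢ[ℝ] X),
        ∃ TF : F →ₗ[ℝ] X,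
          (∀ e : E, TF (e : F) = TE e) ∧
          (∀ f : F, (1 + ε)⁻¹ * ‖f‖ ≤ ‖TF f‖ ∧ ‖TF f‖ ≤ (1 + ε) * ‖f‖)

/-- `X` is a Lindenstrauss space: its dual is isometric to some `L¹(μ)`. -/
def IsLindenstrauss (X : Type u) [NormedAddCommGroup X] [NormedSpace ℝ X] : Prop :=
  ∃ (α : Type u) (m : MeasurableSpace α) (μ : @MeasureTheory.Measure α m),
    Nonempty ((X →L[ℝ] ℝ) ≃ₗᵢ[ℝ] MeasureTheory.Lp ℝ 1 μ)

/-!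
The strong diameter 2 property is separably determined: finitely many slices are given by finitely
many functionals, whose norms are already determined on a countable set, so it suffices that every
countable set lies in a subspace `X` having the property.

Every countable set lies in a separable closed super-ideal. A finite tuple of `Y` is seen, from
parameters in a separable subspace `S`, only through the norm it induces on coefficient vectors, and
these norms form a separable metric space; so countably many tuples suffice to approximate all of
them. Adjoining such tuples countably often and taking the closure gives a subspace `X` over which
every finite tuple of `Y` has approximate copies in `X`. A basis of `X ∩ E`, completed to a basis
of `E`, then yields the operator `T : E → X`.
-/

section Separability

theorem exists_countable_forall_exists_dist_lt {α M : Type*} [PseudoMetricSpace M]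
    [TopologicalSpace.SeparableSpace M] (f : α → M) :
    ∃ s : Set α, s.Countable ∧ ∀ a, ∀ η > 0, ∃ b ∈ s, dist (f a) (f b) < η := by
  obtain ⟨t, ht, htc, hft⟩ :=
    (TopologicalSpace.IsSeparable.of_separableSpace (range f)).exists_countable_dense_subset
  obtain ⟨s, rfl, hs⟩ := exists_image_eq_injOn_of_subset_range ht
  refine ⟨s, countable_of_injective_of_countable_image hs htc, fun a η hη => ?_⟩
  exact exists_mem_image.mp (Metric.mem_closure_iff.mp (hft (mem_range_self a)) η hη)

theorem exists_countable_forall_norm_comp_subtypeL_eq {E F : Type*} [NormedAddCommGroup E]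
    [NormedSpace ℝ E] [SeminormedAddCommGroup F] [NormedSpace ℝ F] (f : E →L[ℝ] F) :
    ∃ A : Set E, A.Countable ∧
      ∀ X : Subspace ℝ E, A ⊆ X → ‖f.comp X.subtypeL‖ = ‖f‖ := by
  obtain ⟨s, hs, hfs⟩ :=
    exists_countable_forall_exists_dist_lt fun x : sphere (0 : E) 1 => ‖f x‖
  refine ⟨(↑) '' s, hs.image _, fun X hX => le_antisymm ?_ ?_⟩
  · calc ‖f.comp X.subtypeL‖ ≤ ‖f‖ * ‖X.subtypeL‖ := f.opNorm_comp_le _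
      _ ≤ ‖f‖ := mul_le_of_le_one_right (norm_nonneg f) X.norm_subtypeL_le
  · refine f.opNorm_le_of_unit_norm (f.comp X.subtypeL).opNorm_nonneg fun x hx => ?_
    refine le_of_forall_pos_lt_add fun η hη => ?_
    obtain ⟨b, hb, hxb⟩ := hfs ⟨x, mem_sphere_zero_iff_norm.mpr hx⟩ η hη
    have hfb : ‖f b‖ ≤ ‖f.comp X.subtypeL‖ :=
      (f.comp X.subtypeL).unit_le_opNorm ⟨b, hX (mem_image_of_mem _ hb)⟩
        (mem_sphere_zero_iff_norm.mp b.2).le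
    linarith [(abs_lt.mp hxb).2]

theorem exists_countable_forall_not_finiteDimensional {K V : Type*} [DivisionRing K]
    [AddCommGroup V] [Module K V] (hV : ¬ FiniteDimensional K V) :
    ∃ A : Set V, A.Countable ∧ ∀ X : Subspace K V, A ⊆ X → ¬ FiniteDimensional K X := by
  have hrank : Cardinal.aleph0 ≤ Module.rank K V :=
    not_lt.mp fun hlt => hV (Module.rank_lt_aleph0_iff.mp hlt)
  obtain ⟨A, hA, hli⟩ := le_rank_iff_exists_linearIndependent.mp hrank
  refine ⟨A, Cardinal.le_aleph0_iff_set_countable.mp hA.le, fun X hAX hX => ?_⟩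
  have : Infinite A := Cardinal.infinite_iff.mpr hA.ge
  have hli' : LinearIndependent K (inclusion hAX) := LinearIndependent.of_comp X.subtype hli
  exact not_finite_iff_infinite.mpr this hli'.finite

end Separability

section CombinationNorm

variable {Y : Type*} [SeminormedAddCommGroup Y] [NormedSpace ℝ Y] {ι : Type*} [Fintype ι]

/-- The norm induced on coefficient vectors by a tuple `v`, restricted to the unit ball of
`ℓ∞(ι)`. It determines the norm on the span of `v`, and as the ball is compact it is a point of a
separable metric space. -/
noncomputable def combinationNorm (v : ι → Y) : C(closedBall (0 : ι → ℝ) 1, ℝ) where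
  toFun t := ‖∑ i, (t : ι → ℝ) i • v i‖
  continuous_toFun := continuous_norm.comp <| continuous_finsetSum _ fun i _ =>
    ((continuous_apply i).comp continuous_subtype_val).smul continuous_const

theorem lipschitzWith_combinationNorm :
    LipschitzWith (Fintype.card ι) (combinationNorm : (ι → Y) → _) := by
  refine LipschitzWith.of_dist_le_mul fun v w => (ContinuousMap.dist_le (by positivity)).mpr ?_
  intro t
  have hterm (i : ι) : ‖(t : ι → ℝ) i • (v i - w i)‖ ≤ dist v w := by
    have ht : ‖(t : ι → ℝ) i‖ ≤ 1 := (norm_le_pi_norm _ i).trans (mem_closedBall_zero_iff.mp t.2)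
    calc ‖(t : ι → ℝ) i • (v i - w i)‖ = ‖(t : ι → ℝ) i‖ * dist (v i) (w i) := by
          rw [norm_smul, dist_eq_norm]
      _ ≤ 1 * dist v w := by gcongr; exact dist_le_pi_dist v w i
      _ = dist v w := one_mul _
  calc dist (combinationNorm v t) (combinationNorm w t)
      ≤ ‖∑ i, (t : ι → ℝ) i • v i - ∑ i, (t : ι → ℝ) i • w i‖ := abs_norm_sub_norm_le _ _
    _ = ‖∑ i, (t : ι → ℝ) i • (v i - w i)‖ := by
      simp only [smul_sub, Finset.sum_sub_distrib]
    _ ≤ ∑ _i : ι, dist v w := norm_sum_le_of_le _ fun i _ => hterm i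
    _ = Fintype.card ι * dist v w := by
      rw [Finset.sum_const, nsmul_eq_mul, Finset.card_univ]

theorem abs_norm_sum_smul_sub_le_dist_combinationNorm (v w : ι → Y) (t : ι → ℝ) :
    |‖∑ i, t i • v i‖ - ‖∑ i, t i • w i‖| ≤
      dist (combinationNorm v) (combinationNorm w) * ‖t‖ := by
  obtain rfl | ht := eq_or_ne t 0
  · simp
  have hpos : 0 < ‖t‖ := norm_pos_iff.mpr ht
  let s : closedBall (0 : ι → ℝ) 1 :=
    ⟨‖t‖⁻¹ • t, mem_closedBall_zero_iff.mpr (norm_smul_inv_norm (𝕜 := ℝ) ht).le⟩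
  have hs (u : ι → Y) : combinationNorm u s = ‖t‖⁻¹ * ‖∑ i, t i • u i‖ := by
    rw [← norm_norm t, ← norm_inv, ← norm_smul, Finset.smul_sum]
    simp [combinationNorm, s, smul_smul]
  have hdist := (combinationNorm v).dist_apply_le_dist (g := combinationNorm w) s
  rw [Real.dist_eq, hs, hs, ← mul_sub, abs_mul, abs_of_pos (inv_pos.mpr hpos)] at hdist
  rwa [inv_mul_le_iff₀ hpos, mul_comm] at hdist

theorem abs_norm_sub_norm_le_dist_combinationNorm {E : Type*} [AddCommGroup E]
    [Module ℝ E] (b : Module.Basis ι ℝ E) (T U : E →ₗ[ℝ] Y) (e : E) :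
    |‖T e‖ - ‖U e‖| ≤ dist (combinationNorm (T ∘ b)) (combinationNorm (U ∘ b)) *
      ‖b.equivFun e‖ := by
  have hsum (S : E →ₗ[ℝ] Y) : S e = ∑ i, b.equivFun e i • (S ∘ b) i := by
    conv_lhs => rw [← b.sum_equivFun e, map_sum]
    simp only [map_smul, Function.comp_apply]
  rw [hsum T, hsum U]
  exact abs_norm_sum_smul_sub_le_dist_combinationNorm _ _ _

theorem exists_pos_forall_abs_norm_sub_norm_le {E : Type*} [NormedAddCommGroup E]
    [NormedSpace ℝ E] (b : Module.Basis ι ℝ E) {δ : ℝ} (hδ : 0 < δ) :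
    ∃ η > 0, ∀ T U : E →ₗ[ℝ] Y, dist (combinationNorm (T ∘ b)) (combinationNorm (U ∘ b)) < η →
      ∀ e, |‖T e‖ - ‖U e‖| ≤ δ * ‖e‖ := by
  have := b.finiteDimensional_of_finite
  obtain ⟨C, hC, hbC⟩ := b.equivFunL.toContinuousLinearMap.bound
  refine ⟨δ / C, by positivity, fun T U hTU e => ?_⟩
  calc |‖T e‖ - ‖U e‖|
      ≤ dist (combinationNorm (T ∘ b)) (combinationNorm (U ∘ b)) * ‖b.equivFun e‖ :=
        abs_norm_sub_norm_le_dist_combinationNorm b T U e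
    _ ≤ δ / C * (C * ‖e‖) := by
        gcongr
        exact hbC e
    _ = δ * ‖e‖ := by field_simp

end CombinationNorm

section ApproximatesTuplesOver

variable {Y : Type*} [SeminormedAddCommGroup Y] [NormedSpace ℝ Y]

/-- Every finite tuple `y` of `Y` can be replaced by a tuple `z` in `X` which satisfies almost the
same norm relations with a given finite tuple `g` of parameters from `S`. -/
def ApproximatesTuplesOver (X S : Set Y) : Prop :=
  ∀ (m k : ℕ) (g : Fin m → Y) (y : Fin k → Y), (∀ i, g i ∈ S) → ∀ η > 0,
    ∃ z : Fin k → Y, (∀ j, z j ∈ X) ∧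
      dist (combinationNorm (Sum.elim g y)) (combinationNorm (Sum.elim g z)) < η

namespace ApproximatesTuplesOver

variable {X X' S S' : Set Y}

theorem mono (h : ApproximatesTuplesOver X S) (hX : X ⊆ X') (hS : S' ⊆ S) :
    ApproximatesTuplesOver X' S' := fun m k g y hg η hη =>
  let ⟨z, hz, hd⟩ := h m k g y (fun i => hS (hg i)) η hη
  ⟨z, fun j => hX (hz j), hd⟩

theorem closure_right (h : ApproximatesTuplesOver X S) :
    ApproximatesTuplesOver X (closure S) := by
  intro m k g y hg η hη
  obtain ⟨δ, hδ, hcn⟩ := Metric.uniformContinuous_iff.mp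
    (lipschitzWith_combinationNorm (Y := Y) (ι := Fin m ⊕ Fin k)).uniformContinuous
    (η / 3) (by positivity)
  choose g' hg' hgg' using fun i => Metric.mem_closure_iff.mp (hg i) δ hδ
  have hchange (u : Fin k → Y) :
      dist (combinationNorm (Sum.elim g u)) (combinationNorm (Sum.elim g' u)) < η / 3 := by
    refine hcn ((dist_pi_lt_iff hδ).mpr ?_)
    rintro (i | j)
    · exact hgg' i
    · simpa only [Sum.elim_inr, dist_self] using hδ
  obtain ⟨z, hz, hyz⟩ := h m k g' y hg' (η / 3) (by positivity)
  refine ⟨z, hz, ?_⟩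
  have htriangle := dist_triangle4_right (combinationNorm (Sum.elim g y))
    (combinationNorm (Sum.elim g z)) (combinationNorm (Sum.elim g' y))
    (combinationNorm (Sum.elim g' z))
  linarith [hchange y, hchange z]

theorem iUnion_right {S : ℕ → Set Y} (hS : Monotone S)
    (h : ∀ n, ApproximatesTuplesOver X (S n)) : ApproximatesTuplesOver X (⋃ n, S n) := by
  intro m k g y hg
  obtain ⟨n, hn⟩ : ∃ n, ∀ i, g i ∈ S n := by
    refine (Filter.eventually_all.mpr fun i => ?_ : ∀ᶠ n in Filter.atTop, ∀ i, g i ∈ S n).exists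
    obtain ⟨N, hN⟩ := mem_iUnion.mp (hg i)
    exact Filter.eventually_atTop.mpr ⟨N, fun n hn => hS hn hN⟩
  exact h n m k g y hn

end ApproximatesTuplesOver

theorem exists_countable_approximatesTuplesOver {S : Set Y}
    (hS : TopologicalSpace.IsSeparable S) :
    ∃ W : Set Y, W.Countable ∧ ApproximatesTuplesOver W S := by
  obtain ⟨C, hC, hSC⟩ := hS
  have : Countable C := hC
  choose D hD hdense using fun (m k : ℕ) (g : Fin m → C) =>
    exists_countable_forall_exists_dist_lt fun y : Fin k → Y =>
      combinationNorm (Sum.elim (fun i => (g i : Y)) y)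
  let W : Set Y := ⋃ (m) (k) (g : Fin m → C), ⋃ z ∈ D m k g, range z
  have hW : W.Countable := countable_iUnion fun m => countable_iUnion fun k =>
    countable_iUnion fun g => (hD m k g).biUnion fun z _ => countable_range z
  have hWC : ApproximatesTuplesOver W C := by
    intro m k g y hg η hη
    obtain ⟨z, hz, hyz⟩ := hdense m k (fun i => ⟨g i, hg i⟩) y η hη
    refine ⟨z, fun j => ?_, hyz⟩
    simp only [W, mem_iUnion]
    exact ⟨m, k, _, z, hz, mem_range_self j⟩
  exact ⟨W, hW, hWC.closure_right.mono Subset.rfl hSC⟩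

theorem exists_isSeparable_approximatesTuplesOver (S : Subspace ℝ Y)
    (hS : TopologicalSpace.IsSeparable (S : Set Y)) :
    ∃ S' : Subspace ℝ Y, TopologicalSpace.IsSeparable (S' : Set Y) ∧ S ≤ S' ∧
      ApproximatesTuplesOver (S' : Set Y) S := by
  obtain ⟨W, hW, hWS⟩ := exists_countable_approximatesTuplesOver hS
  have hsub : (S : Set Y) ∪ W ⊆ Submodule.span ℝ ((S : Set Y) ∪ W) := Submodule.subset_span
  exact ⟨Submodule.span ℝ (S ∪ W), (hS.union hW.isSeparable).span,
    subset_union_left.trans hsub, hWS.mono (subset_union_right.trans hsub) Subset.rfl⟩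

theorem exists_isClosed_isSeparable_approximatesTuplesOver_self {A : Set Y}
    (hA : TopologicalSpace.IsSeparable A) :
    ∃ X : Subspace ℝ Y, IsClosed (X : Set Y) ∧ TopologicalSpace.IsSeparable (X : Set Y) ∧
      A ⊆ X ∧ ApproximatesTuplesOver (X : Set Y) X := by
  choose next hsep hle happrox using
    fun S : {S : Subspace ℝ Y // TopologicalSpace.IsSeparable (S : Set Y)} =>
      exists_isSeparable_approximatesTuplesOver S.1 S.2
  let Z (n : ℕ) : {S : Subspace ℝ Y // TopologicalSpace.IsSeparable (S : Set Y)} :=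
    (fun S => ⟨next S, hsep S⟩)^[n] ⟨Submodule.span ℝ A, hA.span⟩
  have hZ (n : ℕ) : (Z (n + 1)).1 = next (Z n) := by
    simp only [Z, Function.iterate_succ_apply']
  have hmono : Monotone fun n => (Z n).1 :=
    monotone_nat_of_le_succ fun n => (hle (Z n)).trans_eq (hZ n).symm
  have hcoe : ((⨆ n, (Z n).1 : Subspace ℝ Y) : Set Y) = ⋃ n, ((Z n).1 : Set Y) :=
    Submodule.coe_iSup_of_directed _ hmono.directed_le
  let X : Subspace ℝ Y := (⨆ n, (Z n).1).topologicalClosure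
  have hX : (X : Set Y) = closure (⋃ n, ((Z n).1 : Set Y)) := by
    rw [Submodule.topologicalClosure_coe, hcoe]
  have hZX (n : ℕ) : ((Z n).1 : Set Y) ⊆ X :=
    hX ▸ (subset_iUnion (fun n => ((Z n).1 : Set Y)) n).trans subset_closure
  refine ⟨X, Submodule.isClosed_topologicalClosure _, ?_, ?_, ?_⟩
  · exact hX ▸ (TopologicalSpace.IsSeparable.iUnion fun n => (Z n).2).closure
  · exact Submodule.subset_span.trans (hZX 0)
  · have hXZ (n : ℕ) : ApproximatesTuplesOver (X : Set Y) (Z n).1 :=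
      (happrox (Z n)).mono (hZ n ▸ hZX (n + 1)) Subset.rfl
    have hXU := ApproximatesTuplesOver.iUnion_right hmono hXZ
    exact hXU.closure_right.mono Subset.rfl hX.le

end ApproximatesTuplesOver

section SeparableSuperIdeals

variable {Y : Type*} [NormedAddCommGroup Y] [NormedSpace ℝ Y]

theorem ApproximatesTuplesOver.exists_linearMap {X : Subspace ℝ Y}
    (hX : ApproximatesTuplesOver (X : Set Y) X) (E : Subspace ℝ Y) [FiniteDimensional ℝ E]
    {δ : ℝ} (hδ : 0 < δ) :
    ∃ T : E →ₗ[ℝ] X, (∀ e : E, (e : Y) ∈ X → (T e : Y) = e) ∧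
      ∀ e : E, |‖T e‖ - ‖e‖| ≤ δ * ‖e‖ := by
  let G : Subspace ℝ E := X.comap E.subtype
  let bG := Module.finBasis ℝ G
  let b := Module.Basis.sumQuot bG (Module.finBasis ℝ (E ⧸ G))
  let g : Fin (Module.finrank ℝ G) → X := fun i => ⟨bG i, (bG i).2⟩
  obtain ⟨η, hη, hclose⟩ := exists_pos_forall_abs_norm_sub_norm_le (Y := Y) b hδ
  obtain ⟨z, hz, hdist⟩ := hX _ _ (fun i => (g i : Y)) (fun j => (b (Sum.inr j) : Y))
    (fun i => (g i).2) η hη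
  let T : E →ₗ[ℝ] X := b.constr ℝ (Sum.elim g fun j => ⟨z j, hz j⟩)
  have hTb : (X.subtype ∘ₗ T) ∘ b = Sum.elim (fun i => (g i : Y)) z := by
    funext i
    rcases i with i | j <;> simp [T]
  have hEb : E.subtype ∘ b = Sum.elim (fun i => (g i : Y)) fun j => (b (Sum.inr j) : Y) := by
    funext i
    rcases i with i | j <;> simp [b, g]
  refine ⟨T, fun e he => ?_, hclose (X.subtype ∘ₗ T) E.subtype ?_⟩
  · have hTG : (X.subtype ∘ₗ T) ∘ₗ G.subtype = E.subtype ∘ₗ G.subtype := by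
      refine bG.ext fun i => ?_
      have hbi : b (Sum.inl i) = bG i := Module.Basis.sumQuot_inl _ _ i
      have hTbi := congrFun hTb (Sum.inl i)
      rwa [Function.comp_apply, hbi] at hTbi
    exact LinearMap.congr_fun hTG ⟨e, he⟩
  · rwa [hTb, hEb, dist_comm]

theorem ApproximatesTuplesOver.isSuperIdeal {X : Subspace ℝ Y}
    (hX : ApproximatesTuplesOver (X : Set Y) X) : IsSuperIdeal X := by
  intro ε hε E _
  have hδ : 1 - (1 + ε)⁻¹ = ε / (1 + ε) := by field_simp; ring
  obtain ⟨T, hfix, hnorm⟩ := hX.exists_linearMap E (δ := ε / (1 + ε)) (by positivity)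
  refine ⟨T, hfix, fun e => ?_⟩
  obtain ⟨hlower, hupper⟩ := abs_le.mp (hnorm e)
  have hle : ε / (1 + ε) * ‖e‖ ≤ ε * ‖e‖ := by
    gcongr
    exact div_le_self hε.le (by linarith)
  rw [← hδ] at hlower
  constructor <;> linarith

theorem exists_isClosed_separableSpace_isSuperIdeal {A : Set Y}
    (hA : TopologicalSpace.IsSeparable A) :
    ∃ X : Subspace ℝ Y, IsClosed (X : Set Y) ∧ TopologicalSpace.SeparableSpace X ∧
      IsSuperIdeal X ∧ A ⊆ X :=
  let ⟨X, hclosed, hsep, hAX, happrox⟩ :=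
    exists_isClosed_isSeparable_approximatesTuplesOver_self hA
  ⟨X, hclosed, hsep.separableSpace, happrox.isSuperIdeal, hAX⟩

theorem IsSuperIdeal.isIdeal {X : Subspace ℝ Y} (hX : IsSuperIdeal X) : IsIdeal X :=
  fun ε hε E hE =>
    let ⟨T, hfix, hnorm⟩ := hX ε hε E hE
    ⟨T, hfix, fun e => (hnorm e).2⟩

end SeparableSuperIdeals

section StrongDiameterTwo

variable {Y : Type*} [NormedAddCommGroup Y] [NormedSpace ℝ Y]

theorem HasStrongDiameterTwoProperty.of_forall_countable
    (h : ∀ A : Set Y, A.Countable →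
      ∃ X : Subspace ℝ Y, A ⊆ X ∧ HasStrongDiameterTwoProperty X) :
    HasStrongDiameterTwoProperty Y := by
  intro n hn S lam hS hlam hsum
  choose f ε hf hε hSf using hS
  choose A hA hnorming using fun i => exists_countable_forall_norm_comp_subtypeL_eq (f i)
  obtain ⟨X, hAX, hX⟩ := h (⋃ i, A i) (countable_iUnion hA)
  have hslice (i : Fin n) : IsSlice X ((↑) ⁻¹' S i) := by
    refine ⟨(f i).comp X.subtypeL, ε i, ?_, hε i, ?_⟩
    · rw [hnorming i X ((subset_iUnion A i).trans hAX), hf i]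
    · ext x
      simp [hSf i]
  have hball : {z : Y | ∃ x : Fin n → Y, (∀ i, x i ∈ S i) ∧ z = ∑ i, lam i • x i} ⊆
      closedBall 0 1 := by
    rintro _ ⟨x, hx, rfl⟩
    refine (convex_closedBall 0 1).sum_mem (fun i _ => hlam i) hsum fun i _ => ?_
    exact (hSf i ▸ hx i).1
  refine le_antisymm ?_ ?_
  · simpa using diam_le_of_subset_closedBall zero_le_one hball
  · rw [← hX n hn _ lam hslice hlam hsum, ← X.subtypeₗᵢ.isometry.diam_image]
    refine diam_mono ?_ (isBounded_closedBall.subset hball)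
    rintro _ ⟨_, ⟨x, hx, rfl⟩, rfl⟩
    exact ⟨fun i => x i, hx, by simp⟩

end StrongDiameterTwo

theorem strongDiameterTwo_of_separable_ideals_general
    (Y : Type*) [NormedAddCommGroup Y] [NormedSpace ℝ Y] (hY : ¬ FiniteDimensional ℝ Y)
    (h : ∀ X : Subspace ℝ Y, IsClosed (X : Set Y) → ¬ FiniteDimensional ℝ X →
      TopologicalSpace.SeparableSpace X → IsSuperIdeal X → HasStrongDiameterTwoProperty X) :
    HasStrongDiameterTwoProperty Y := by
  obtain ⟨B, hB, hinf⟩ := exists_countable_forall_not_finiteDimensional hY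
  refine .of_forall_countable fun A hA => ?_
  obtain ⟨X, hclosed, hsep, hideal, hABX⟩ :=
    exists_isClosed_separableSpace_isSuperIdeal (hA.union hB).isSeparable
  have hXinf := hinf X (subset_union_right.trans hABX)
  exact ⟨X, subset_union_left.trans hABX, h X hclosed hXinf hsep hideal⟩

theorem strongDiameterTwo_of_separable_ideals
    (Y : Type*) [NormedAddCommGroup Y] [NormedSpace ℝ Y] [CompleteSpace Y]
    (hY : ¬ FiniteDimensional ℝ Y)
    (h : ∀ X : Subspace ℝ Y, IsClosed (X : Set Y) → ¬ FiniteDimensional ℝ X →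
      TopologicalSpace.SeparableSpace X → IsIdeal X → HasStrongDiameterTwoProperty X) :
    HasStrongDiameterTwoProperty Y :=
  strongDiameterTwo_of_separable_ideals_general Y hY fun X hclosed hinf hsep hideal =>
    h X hclosed hinf hsep hideal.isIdeal
end

section
/- Let X be a Gurariĭ space. Then X is a super-ideal in every superspace: for every Banach space Y and every linear isometric embedding i : X → Y, the subspace i(X) is a super-ideal in Y. -/
universe u v

open Metric Set

theorem exists_linearIsometryEquiv_of_small (𝕜 : Type*) [NormedField 𝕜]
    (V : Type*) [NormedAddCommGroup V] [NormedSpace 𝕜 V] [Small.{u} V] :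
    ∃ (W : Type u) (_ : NormedAddCommGroup W) (_ : NormedSpace 𝕜 W), Nonempty (W ≃ₗᵢ[𝕜] V) := by
  let e : Shrink.{u} V ≃ₗ[𝕜] V := Shrink.linearEquiv 𝕜 V
  let normedAddCommGroup : NormedAddCommGroup (Shrink.{u} V) := .induced _ V e e.injective
  let normedSpace : NormedSpace 𝕜 (Shrink.{u} V) := .induced 𝕜 _ V e
  exact ⟨Shrink.{u} V, normedAddCommGroup, normedSpace, ⟨e, fun _ ↦ rfl⟩⟩

namespace IsGurarii

variable {X : Type*} [NormedAddCommGroup X] [NormedSpace ℝ X]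

/-- `IsGurarii` only tests spaces `F : Type`, but a finite-dimensional space in any universe has an
isometric copy in `Type`. -/
theorem exists_extension (hX : IsGurarii X) {ε : ℝ} (hε : 0 < ε)
    {F : Type*} [NormedAddCommGroup F] [NormedSpace ℝ F] [FiniteDimensional ℝ F]
    (E : Subspace ℝ F) (TE : E →ₗᵢ[ℝ] X) :
    ∃ TF : F →ₗ[ℝ] X,
      (∀ e : E, TF (e : F) = TE e) ∧
      (∀ f : F, (1 + ε)⁻¹ * ‖f‖ ≤ ‖TF f‖ ∧ ‖TF f‖ ≤ (1 + ε) * ‖f‖) := by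
  have : Small.{0} F := Module.Finite.small ℝ F
  obtain ⟨F₀, _, _, ⟨φ⟩⟩ := exists_linearIsometryEquiv_of_small.{0} ℝ F
  have : FiniteDimensional ℝ F₀ := φ.symm.toLinearEquiv.finiteDimensional
  let ψ := φ.symm.submoduleMap E
  obtain ⟨T, hT_ext, hT_norm⟩ := hX ε hε F₀ _ (TE.comp ψ.symm.toLinearIsometry)
  refine ⟨T ∘ₗ φ.symm.toLinearEquiv, fun e ↦ ?_, fun f ↦ ?_⟩
  · calc
      T (φ.symm e) = TE (ψ.symm (ψ e)) := hT_ext (ψ e)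
      _ = TE e := by rw [ψ.symm_apply_apply]
  · simpa only [LinearMap.comp_apply, LinearEquiv.coe_coe, φ.symm.coe_toLinearEquiv,
      φ.symm.norm_map] using hT_norm (φ.symm f)

theorem of_linearIsometryEquiv (hX : IsGurarii X)
    {Z : Type*} [NormedAddCommGroup Z] [NormedSpace ℝ Z] (J : X ≃ₗᵢ[ℝ] Z) : IsGurarii Z := by
  intro ε hε F _ _ _ E TE
  obtain ⟨T, hT_ext, hT_norm⟩ := hX ε hε F E (J.symm.toLinearIsometry.comp TE)
  refine ⟨J.toLinearEquiv ∘ₗ T, fun e ↦ ?_, fun f ↦ ?_⟩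
  · calc
      J (T e) = J (J.symm (TE e)) := congrArg J (hT_ext e)
      _ = TE e := J.apply_symm_apply _
  · simpa only [LinearMap.comp_apply, LinearEquiv.coe_coe, J.coe_toLinearEquiv,
      J.norm_map] using hT_norm f

theorem isSuperIdeal {Y : Type*} [NormedAddCommGroup Y] [NormedSpace ℝ Y] {R : Subspace ℝ Y}
    (hR : IsGurarii R) : IsSuperIdeal R := by
  intro ε hε E _
  let inclusion : R.submoduleOf E →ₗᵢ[ℝ] R := ⟨E.subtype.restrict fun _ he ↦ he, fun _ ↦ rfl⟩
  obtain ⟨T, hT_ext, hT_norm⟩ := hR.exists_extension hε (R.submoduleOf E) inclusion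
  exact ⟨T, fun e he ↦ congrArg Subtype.val (hT_ext ⟨e, he⟩), hT_norm⟩

end IsGurarii

theorem gurarii_superIdeal_in_every_superspace_general
    (X : Type u) [NormedAddCommGroup X] [NormedSpace ℝ X] (hX : IsGurarii X)
    (Y : Type v) [NormedAddCommGroup Y] [NormedSpace ℝ Y] (i : X →ₗᵢ[ℝ] Y) :
    IsSuperIdeal (LinearMap.range i.toLinearMap) :=
  (hX.of_linearIsometryEquiv i.equivRange).isSuperIdeal

theorem gurarii_superIdeal_in_every_superspace
    (X : Type u) [NormedAddCommGroup X] [NormedSpace ℝ X] [CompleteSpace X]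
    (hX : IsGurarii X) :
    ∀ (Y : Type v) [NormedAddCommGroup Y] [NormedSpace ℝ Y] [CompleteSpace Y],
      ∀ i : X →ₗᵢ[ℝ] Y, IsSuperIdeal (LinearMap.range i.toLinearMap) := by
  intro Y _ _ _ i
  exact gurarii_superIdeal_in_every_superspace_general X hX Y i
end
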